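/- Let X be a Banach space, U an evolution operator on X, P a family of projectors compatible with U with complementary family Q, V the associated map, and h, k growth rates. If (U,P) is (h,k)-dichotomic, then the family of norms |||x|||_t = sup_{τ ≥ t} (h(τ)/h(t))‖U(τ,t)P(t)x‖ + sup_{0 ≤ τ ≤ t} (k(t)/k(τ))‖V(t,τ)Q(t)x‖ satisfies h(t)|||U(t,s)P(s)x|||_t ≤ h(s)|||P(s)x|||_s and k(t)|||V(t,s)Q(t)x|||_s ≤ k(s)|||Q(t)x|||_t for all t ≥ s ≥ 0 and x ∈ X. -/

import Mathlib

open Set Filter Real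

variable {X : Type*} [NormedAddCommGroup X] [NormedSpace ℝ X] [CompleteSpace X]

/-- `U : Δ → B(X)` is an evolution operator on `X`. -/
def EvolutionOperator (U : ℝ → ℝ → X →L[ℝ] X) : Prop :=
  (∀ t : ℝ, 0 ≤ t → U t t = ContinuousLinearMap.id ℝ X) ∧
  (∀ t s t₀ : ℝ, 0 ≤ t₀ → t₀ ≤ s → s ≤ t → U t t₀ = (U t s).comp (U s t₀))

/-- `P : ℝ₊ → B(X)` is a family of projectors on `X`. -/
def ProjectorFamily (P : ℝ → X →L[ℝ] X) : Prop :=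
  ∀ t : ℝ, 0 ≤ t → (P t).comp (P t) = P t

/-- `P` is invariant for the evolution operator `U`. -/
def InvariantFor (U : ℝ → ℝ → X →L[ℝ] X) (P : ℝ → X →L[ℝ] X) : Prop :=
  ∀ t s : ℝ, 0 ≤ s → s ≤ t → ∀ x : X, U t s (P s x) = P t (U t s x)

/-- `P` is compatible with `U` : it is invariant for `U` and for every `t ≥ s ≥ 0`
the restriction of `U t s` to `Ker P s` is an isomorphism from `Ker P s` onto
`Ker P t` (a bounded bijection between these closed subspaces of the Banach
space `X`, hence an isomorphism). -/
def CompatibleWith (U : ℝ → ℝ → X →L[ℝ] X) (P : ℝ → X →L[ℝ] X) : Prop :=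
  InvariantFor U P ∧
  ∀ t s : ℝ, 0 ≤ s → s ≤ t →
    Set.BijOn (U t s) {x : X | P s x = 0} {x : X | P t x = 0}

/-- a growth rate : a nondecreasing map `ℝ₊ → [1, ∞)` tending to `∞`. -/
def GrowthRate (h : ℝ → ℝ) : Prop :=
  MonotoneOn h (Ici (0 : ℝ)) ∧ (∀ t : ℝ, 0 ≤ t → 1 ≤ h t) ∧ Tendsto h atTop atTop

/-- a nondecreasing map `ℝ₊ → [1, ∞)`. -/
def Nondecr1 (N : ℝ → ℝ) : Prop :=
  MonotoneOn N (Ici (0 : ℝ)) ∧ ∀ t : ℝ, 0 ≤ t → 1 ≤ N t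

/-- the pair `(U, P)` is (nonuniformly) `(h,k)`-dichotomic; here
`Q t x = x - P t x` is the complementary family of projectors. -/
def Dichotomic (U : ℝ → ℝ → X →L[ℝ] X) (P : ℝ → X →L[ℝ] X) (h k : ℝ → ℝ) : Prop :=
  ∃ N : ℝ → ℝ, Nondecr1 N ∧
    ∀ t s : ℝ, 0 ≤ s → s ≤ t → ∀ x : X,
      h t * ‖U t s (P s x)‖ ≤ N s * (h s * ‖P s x‖) ∧
      k t * ‖x - P s x‖ ≤ N t * (k s * ‖U t s (x - P s x)‖)

/-- the pair `(U, P)` has `(h,k)`-growth. -/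
def HasGrowth (U : ℝ → ℝ → X →L[ℝ] X) (P : ℝ → X →L[ℝ] X) (h k : ℝ → ℝ) : Prop :=
  ∃ M : ℝ → ℝ, Nondecr1 M ∧
    ∀ t s : ℝ, 0 ≤ s → s ≤ t → ∀ x : X,
      h s * ‖U t s (P s x)‖ ≤ M s * (h t * ‖P s x‖) ∧
      k s * ‖x - P s x‖ ≤ M t * (k t * ‖U t s (x - P s x)‖)

/-- `f : X → ℝ` is a norm on `X`. -/
def IsNormOn (f : X → ℝ) : Prop :=
  (∀ x : X, 0 ≤ f x) ∧ (∀ x : X, f x = 0 ↔ x = 0) ∧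
  (∀ (a : ℝ) (x : X), f (a • x) = |a| * f x) ∧
  (∀ x y : X, f (x + y) ≤ f x + f y)

/-- a family of norms `{‖·‖_t : t ≥ 0}` compatible with the family of
projectors `P` (with complementary family `Q t x = x - P t x`). -/
def CompatibleNorms (P : ℝ → X →L[ℝ] X) (nn : ℝ → X → ℝ) : Prop :=
  (∀ t : ℝ, 0 ≤ t → IsNormOn (nn t)) ∧
  ∃ N : ℝ → ℝ, Nondecr1 N ∧
    ∀ t : ℝ, 0 ≤ t → ∀ x : X,
      ‖x‖ ≤ nn t x ∧ nn t x ≤ N t * (‖P t x‖ + ‖x - P t x‖)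

/-- the Lyapunov type family of norms built from the `(h,k)`-growth property:
`‖x‖_t = sup_{τ ≥ t} (h t / h τ)‖U(τ,t)P(t)x‖ + sup_{0 ≤ τ ≤ t} (k τ / k t)‖V(t,τ)Q(t)x‖`. -/
noncomputable def lyapG (U V : ℝ → ℝ → X →L[ℝ] X) (P : ℝ → X →L[ℝ] X)
    (h k : ℝ → ℝ) (t : ℝ) (x : X) : ℝ :=
  (⨆ τ : Ici t, (h t / h (τ : ℝ)) * ‖U (τ : ℝ) t (P t x)‖) +
  (⨆ τ : Icc (0 : ℝ) t, (k (τ : ℝ) / k t) * ‖V t (τ : ℝ) (x - P t x)‖)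

/-- the Lyapunov type family of norms built from the `(h,k)`-dichotomy property:
`|||x|||_t = sup_{τ ≥ t} (h τ / h t)‖U(τ,t)P(t)x‖ + sup_{0 ≤ τ ≤ t} (k t / k τ)‖V(t,τ)Q(t)x‖`. -/
noncomputable def lyapD (U V : ℝ → ℝ → X →L[ℝ] X) (P : ℝ → X →L[ℝ] X)
    (h k : ℝ → ℝ) (t : ℝ) (x : X) : ℝ :=
  (⨆ τ : Ici t, (h (τ : ℝ) / h t) * ‖U (τ : ℝ) t (P t x)‖) +
  (⨆ τ : Icc (0 : ℝ) t, (k t / k (τ : ℝ)) * ‖V t (τ : ℝ) (x - P t x)‖)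

/-- On the range of `P t` the Lyapunov norm reduces to its stable part. -/
theorem lyapD_of_apply_eq_self (U V : ℝ → ℝ → X →L[ℝ] X) (P : ℝ → X →L[ℝ] X) (h k : ℝ → ℝ)
    {t : ℝ} {x : X} (hx : P t x = x) :
    lyapD U V P h k t x = ⨆ τ : Ici t, (h (τ : ℝ) / h t) * ‖U (τ : ℝ) t x‖ := by
  simp [lyapD, hx]

/-- On the kernel of `P t` the Lyapunov norm reduces to its unstable part. -/
theorem lyapD_of_apply_eq_zero (U V : ℝ → ℝ → X →L[ℝ] X) (P : ℝ → X →L[ℝ] X) (h k : ℝ → ℝ)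
    {t : ℝ} {x : X} (hx : P t x = 0) :
    lyapD U V P h k t x = ⨆ τ : Icc (0 : ℝ) t, (k t / k (τ : ℝ)) * ‖V t (τ : ℝ) x‖ := by
  simp [lyapD, hx]

theorem GrowthRate.pos {h : ℝ → ℝ} (hh : GrowthRate h) {t : ℝ} (ht : 0 ≤ t) : 0 < h t :=
  zero_lt_one.trans_le (hh.2.1 t ht)

/-- (from the proof of Theorem 3.7) : if `(U,P)` is `(h,k)`-dichotomic, then the
family of norms `lyapD` satisfies `(hd₁'')` and `(kd₂'')`. -/
theorem stmt7 (U V : ℝ → ℝ → X →L[ℝ] X) (P : ℝ → X →L[ℝ] X) (h k : ℝ → ℝ)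
    (hU : EvolutionOperator U) (hP : ProjectorFamily P) (hC : CompatibleWith U P)
    (hh : GrowthRate h) (hk : GrowthRate k)
    (hv1 : ∀ t s : ℝ, 0 ≤ s → s ≤ t → ∀ x : X, U t s (V t s (x - P t x)) = x - P t x)
    (hv2 : ∀ t s : ℝ, 0 ≤ s → s ≤ t → ∀ x : X, V t s (U t s (x - P s x)) = x - P s x)
    (hv3 : ∀ t s t₀ : ℝ, 0 ≤ t₀ → t₀ ≤ s → s ≤ t → ∀ x : X,
      V t t₀ (x - P t x) = V s t₀ (V t s (x - P t x)))
    (hv4 : ∀ t s : ℝ, 0 ≤ s → s ≤ t → ∀ x : X,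
      V t s (x - P t x) = V t s (x - P t x) - P s (V t s (x - P t x)))
    (hd : Dichotomic U P h k) :
    ∀ t s : ℝ, 0 ≤ s → s ≤ t → ∀ x : X,
      h t * lyapD U V P h k t (U t s (P s x)) ≤ h s * lyapD U V P h k s (P s x) ∧
      k t * lyapD U V P h k s (V t s (x - P t x)) ≤
        k s * lyapD U V P h k t (x - P t x) := by
  obtain ⟨N, -, hN⟩ := hd
  intro t s hs hst x
  have ht : 0 ≤ t := hs.trans hst
  have hht := hh.pos ht
  have hhs := hh.pos hs
  have hkt := hk.pos ht
  have hks := hk.pos hs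
  have hPP : ∀ r, 0 ≤ r → ∀ y, P r (P r y) = P r y := fun r hr y =>
    DFunLike.congr_fun (hP r hr) y
  constructor
  · rw [lyapD_of_apply_eq_self U V P h k (hPP s hs x),
      lyapD_of_apply_eq_self U V P h k (by rw [← hC.1 t s hs hst, hPP s hs]),
      Real.mul_iSup_of_nonneg hht.le]
    have : Nonempty (Ici t) := ⟨⟨t, self_mem_Ici⟩⟩
    have hbdd : BddAbove (range fun τ : Ici s => (h (τ : ℝ) / h s) * ‖U (τ : ℝ) s (P s x)‖) := by
      refine ⟨N s * ‖P s x‖, ?_⟩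
      rintro _ ⟨⟨τ, hτ⟩, rfl⟩
      have := (hN τ s hs hτ x).1
      change h τ / h s * _ ≤ _
      rw [div_mul_eq_mul_div, div_le_iff₀ hhs]
      linarith
    refine ciSup_le ?_
    rintro ⟨τ, hτ⟩
    have hsup := le_ciSup hbdd ⟨τ, hst.trans hτ⟩
    have hcomp : U τ t (U t s (P s x)) = U τ s (P s x) := by
      rw [hU.2 τ t s hs hst hτ]; rfl
    calc h t * (h τ / h t * ‖U τ t (U t s (P s x))‖)
        = h s * (h τ / h s * ‖U τ s (P s x)‖) := by rw [hcomp]; field_simp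
      _ ≤ _ := mul_le_mul_of_nonneg_left hsup hhs.le
  · have hPV : P s (V t s (x - P t x)) = 0 := by
      have := hv4 t s hs hst x
      rwa [eq_comm, sub_eq_self] at this
    rw [lyapD_of_apply_eq_zero U V P h k hPV,
      lyapD_of_apply_eq_zero U V P h k (by rw [map_sub, hPP t ht, sub_self]),
      Real.mul_iSup_of_nonneg hkt.le]
    have : Nonempty (Icc 0 s) := ⟨⟨s, right_mem_Icc.2 hs⟩⟩
    have hbdd : BddAbove (range fun τ : Icc (0 : ℝ) t =>
        (k t / k (τ : ℝ)) * ‖V t (τ : ℝ) (x - P t x)‖) := by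
      refine ⟨N t * ‖x - P t x‖, ?_⟩
      rintro _ ⟨⟨τ, hτ₀, hτ⟩, rfl⟩
      have := (hN t τ hτ₀ hτ (V t τ (x - P t x))).2
      rw [← hv4 t τ hτ₀ hτ, hv1 t τ hτ₀ hτ] at this
      change k t / k τ * _ ≤ _
      rw [div_mul_eq_mul_div, div_le_iff₀ (hk.pos hτ₀)]
      linarith
    refine ciSup_le ?_
    rintro ⟨τ, hτ₀, hτ⟩
    have hsup := le_ciSup hbdd ⟨τ, hτ₀, hτ.trans hst⟩
    calc k t * (k s / k τ * ‖V s τ (V t s (x - P t x))‖)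
        = k s * (k t / k τ * ‖V t τ (x - P t x)‖) := by
          rw [← hv3 t s τ hτ₀ hτ hst]; ring
      _ ≤ _ := mul_le_mul_of_nonneg_left hsup hks.le
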